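/- Let Ω be a nonempty open subset of ℂ. Then the set S_uc \ S_u is spaceable in H(Ω)^ℕ: there exists a closed infinite-dimensional vector subspace M of H(Ω)^ℕ such that M \ {0} ⊆ S_uc \ S_u. -/

import Mathlib

open Filter Topology

set_option synthInstance.maxHeartbeats 1000000
set_option maxHeartbeats 1000000

noncomputable section

/-- The subalgebra of `C(Ω, ℂ)` consisting of (restrictions to `Ω` of) functions
holomorphic on `Ω`. -/
def Hol (Ω : Set ℂ) : Subalgebra ℂ C(Ω, ℂ) where
  carrier := {f | ∃ g : ℂ → ℂ, DifferentiableOn ℂ g Ω ∧ ∀ z : Ω, f z = g z}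
  mul_mem' := by
    rintro f₁ f₂ ⟨g₁, hg₁, he₁⟩ ⟨g₂, hg₂, he₂⟩
    exact ⟨g₁ * g₂, hg₁.mul hg₂, fun z => by simp [he₁ z, he₂ z]⟩
  add_mem' := by
    rintro f₁ f₂ ⟨g₁, hg₁, he₁⟩ ⟨g₂, hg₂, he₂⟩
    exact ⟨g₁ + g₂, hg₁.add hg₂, fun z => by simp [he₁ z, he₂ z]⟩
  algebraMap_mem' := fun c => ⟨fun _ => c, differentiableOn_const c, fun _ => rfl⟩

/-- The space `H(Ω)^ℕ` of sequences of holomorphic functions on `Ω`, with the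
product topology (each factor carrying the compact-open topology). -/
abbrev HSeq (Ω : Set ℂ) := ℕ → Hol Ω

/-- Sequences tending to `0` pointwise on `Ω`. -/
def Sp (Ω : Set ℂ) : Set (HSeq Ω) :=
  {F | ∀ z : Ω, Tendsto (fun n => (F n : C(Ω, ℂ)) z) atTop (𝓝 0)}

/-- Sequences tending to `0` uniformly on each compact subset of `Ω`. -/
def Suc (Ω : Set ℂ) : Set (HSeq Ω) :=
  {F | ∀ K : Set Ω, IsCompact K →
    TendstoUniformlyOn (fun n (z : Ω) => (F n : C(Ω, ℂ)) z) 0 atTop K}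

/-- Sequences tending to `0` uniformly on `Ω`. -/
def Su (Ω : Set ℂ) : Set (HSeq Ω) :=
  {F | TendstoUniformly (fun n (z : Ω) => (F n : C(Ω, ℂ)) z) 0 atTop}

/-- Restriction of a holomorphic function on `Ω₂` to a subset `Ω₁ ⊆ Ω₂`. -/
def holRestrict {Ω₁ Ω₂ : Set ℂ} (h : Ω₁ ⊆ Ω₂) (f : Hol Ω₂) : Hol Ω₁ := by
  refine ⟨(f : C(Ω₂, ℂ)).comp ⟨Set.inclusion h, continuous_inclusion h⟩, ?_⟩
  obtain ⟨g, hg, he⟩ := f.2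
  exact ⟨g, hg.mono h, fun z => he ⟨z, h z.2⟩⟩

end

/-!
Fix `c ∈ Ω` with connected component `V`, an unbounded `h ∈ H(Ω)`, and points `p n → c` in
`Ω \ {c}`. The subspace `M` consists of the sequences `(g, ℓ 0 g • h, ℓ 1 g • h, …)` with
`ℓ n g = (p n - c) * g (p n)`, for `g` vanishing off `V`. As `ℓ n g → 0`, they tend to `0` locally
uniformly. If `g ≠ 0`, the zeros of `g` do not accumulate at `c`, so that `ℓ n g ≠ 0` for large `n`
and the unbounded functions `ℓ n g • h` do not tend to `0` uniformly.
-/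

section ConsSMul

variable {𝕜 E : Type*} [Semiring 𝕜] [TopologicalSpace 𝕜] [AddCommMonoid E] [TopologicalSpace E]
  [Module 𝕜 E] [ContinuousSMul 𝕜 E]

/-- The operator `x ↦ (x, ℓ 0 x • h, ℓ 1 x • h, …)` from `E` to the sequences in `E`. Keeping `x` as
the first term makes the images of closed subspaces closed, whatever the functionals `ℓ n` are. -/
def consSMul (ℓ : ℕ → E →L[𝕜] 𝕜) (h : E) : E →L[𝕜] ℕ → E :=
  ContinuousLinearMap.pi fun
    | 0 => .id 𝕜 E
    | n + 1 => (ℓ n).smulRight h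

theorem leftInverse_consSMul (ℓ : ℕ → E →L[𝕜] 𝕜) (h : E) :
    Function.LeftInverse (fun F : ℕ → E => F 0) (consSMul ℓ h) := fun _ => rfl

theorem consSMul_succ (ℓ : ℕ → E →L[𝕜] 𝕜) (h x : E) (n : ℕ) :
    consSMul ℓ h x (n + 1) = ℓ n x • h := rfl

theorem isClosed_map_consSMul [T2Space E] (ℓ : ℕ → E →L[𝕜] 𝕜) (h : E) {S : Submodule 𝕜 E}
    (hS : IsClosed (S : Set E)) :
    IsClosed (S.map (consSMul ℓ h).toLinearMap : Set (ℕ → E)) :=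
  ((leftInverse_consSMul ℓ h).isClosedEmbedding (continuous_apply 0)
    (consSMul ℓ h).continuous).isClosedMap _ hS

theorem finite_map_consSMul_iff (ℓ : ℕ → E →L[𝕜] 𝕜) (h : E) (S : Submodule 𝕜 E) :
    Module.Finite 𝕜 (S.map (consSMul ℓ h).toLinearMap) ↔ Module.Finite 𝕜 S :=
  (Module.Finite.equiv_iff
    (S.equivMapOfInjective _ (leftInverse_consSMul ℓ h).injective)).symm

theorem tendsto_consSMul_zero {ℓ : ℕ → E →L[𝕜] 𝕜} {x : E}
    (hℓ : Tendsto (fun n => ℓ n x) atTop (𝓝 0)) (h : E) :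
    Tendsto (consSMul ℓ h x) atTop (𝓝 0) := by
  rw [← tendsto_add_atTop_iff_nat 1]
  simpa only [consSMul_succ, zero_smul] using hℓ.smul_const h

end ConsSMul

theorem isBounded_range_of_tendstoUniformly_smul {ι X 𝕜 E : Type*} [NormedField 𝕜]
    [SeminormedAddCommGroup E] [NormedSpace 𝕜 E] {l : Filter ι} {a : ι → 𝕜} {f : X → E}
    (hf : TendstoUniformly (fun i x => a i • f x) 0 l) (ha : ∃ᶠ i in l, a i ≠ 0) :
    Bornology.IsBounded (Set.range f) := by
  obtain ⟨i, hi, hbound⟩ := (ha.and_eventually (Metric.tendstoUniformly_iff.mp hf 1 one_pos)).exists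
  refine isBounded_iff_forall_norm_le.mpr ⟨‖a i‖⁻¹, Set.forall_mem_range.mpr fun x => ?_⟩
  have hx : ‖a i‖ * ‖f x‖ < 1 := by simpa [norm_smul] using hbound x
  rw [← one_div, le_div_iff₀' (norm_pos_iff.mpr hi)]
  exact hx.le

theorem not_isCompact_of_isOpen {X : Type*} [TopologicalSpace X] [T2Space X] [PreconnectedSpace X]
    [NoncompactSpace X] {U : Set X} (hU : IsOpen U) (hne : U.Nonempty) : ¬ IsCompact U := fun hK =>
  noncompact_univ X (IsClopen.eq_univ ⟨hK.isClosed, hU⟩ hne ▸ hK)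

theorem perfectSpace_of_isOpen {X : Type*} [TopologicalSpace X] [PerfectSpace X] {U : Set X}
    (hU : IsOpen U) : PerfectSpace U :=
  perfectSpace_iff_forall_not_isolated.mpr fun x =>
    nhds_ne_subtype_neBot_iff.mpr (hU.preperfect x x.2)

variable {Ω : Set ℂ}

theorem mem_Suc_iff_tendsto_zero {F : HSeq Ω} : F ∈ Suc Ω ↔ Tendsto F atTop (𝓝 0) := by
  rw [tendsto_subtype_rng, ContinuousMap.tendsto_iff_forall_isCompact_tendstoUniformlyOn]
  rfl

theorem consSMul_notMem_Su {ℓ : ℕ → Hol Ω →L[ℂ] ℂ} {g h : Hol Ω}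
    (hh : ¬ Bornology.IsBounded (Set.range h.1)) (hℓ : ∃ᶠ n in atTop, ℓ n g ≠ 0) :
    consSMul ℓ h g ∉ Su Ω := fun hu =>
  hh <| isBounded_range_of_tendstoUniformly_smul
    (fun u hU => (tendsto_add_atTop_nat 1).eventually (hu u hU)) hℓ

namespace Hol

/-- A function differentiable on `Ω`, as an element of `Hol Ω`. -/
def ofDifferentiableOn (f : ℂ → ℂ) (hf : DifferentiableOn ℂ f Ω) : Hol Ω :=
  ⟨⟨fun z => f z, hf.continuousOn.domRestrict⟩, f, hf, fun _ => rfl⟩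

/-- Evaluation at a point, as a continuous linear functional on `Hol Ω`. -/
noncomputable def eval (z : Ω) : Hol Ω →L[ℂ] ℂ :=
  (ContinuousMap.evalCLM ℂ z).comp (Subalgebra.toSubmodule (Hol Ω)).subtypeL

variable (Ω) in
/-- The coordinate function `z ↦ z`, as an element of `Hol Ω`. -/
def coord : Hol Ω :=
  ofDifferentiableOn id differentiableOn_id

theorem aeval_coord_apply (P : Polynomial ℂ) (z : Ω) :
    (Polynomial.aeval (coord Ω) P).1 z = P.eval (z : ℂ) :=
  (Polynomial.aeval_algHom_apply ((ContinuousMap.evalAlgHom ℂ ℂ z).comp (Hol Ω).val) _ P).symm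

theorem exists_not_isBounded_range (hΩ : ¬ IsCompact Ω) :
    ∃ h : Hol Ω, ¬ Bornology.IsBounded (Set.range h.1) := by
  by_cases hcl : IsClosed Ω
  · refine ⟨coord Ω, fun hb => hΩ ?_⟩
    have hrange : Set.range (fun z : Ω => (z : ℂ)) = Ω := Subtype.range_coe
    exact Metric.isCompact_iff_isClosed_bounded.mpr ⟨hcl, hrange ▸ hb⟩
  · obtain ⟨a, ha, haΩ⟩ : ∃ a ∈ closure Ω, a ∉ Ω :=
      Set.not_subset.mp (mt closure_subset_iff_isClosed.mp hcl)
    have hne : ∀ z ∈ Ω, z - a ≠ 0 := fun z hz => sub_ne_zero.mpr (ne_of_mem_of_not_mem hz haΩ)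
    refine ⟨ofDifferentiableOn (fun z => (z - a)⁻¹) ((differentiableOn_id.sub_const a).inv hne),
      fun hb => ?_⟩
    have hpole : Tendsto (fun z => (z - a)⁻¹) (𝓝[Ω] a) (Bornology.cobounded ℂ) := by
      refine tendsto_inv₀_nhdsNE_zero.comp (tendsto_nhdsWithin_iff.mpr ⟨?_, ?_⟩)
      · exact (tendsto_sub_nhds_zero_iff.mpr tendsto_id).mono_left nhdsWithin_le_nhds
      · exact eventually_nhdsWithin_of_forall hne
    have := mem_closure_iff_nhdsWithin_neBot.mp ha
    obtain ⟨z, hz, hzΩ⟩ :=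
      ((hpole.eventually (Bornology.isBounded_def.mp hb)).and self_mem_nhdsWithin).exists
    exact hz ⟨⟨z, hzΩ⟩, rfl⟩

theorem locallyConstant_mem (f : LocallyConstant Ω ℂ) : (f : C(Ω, ℂ)) ∈ Hol Ω := by
  have hext : ∀ z : Ω, Function.extend Subtype.val f 0 (z : ℂ) = f z :=
    Subtype.val_injective.extend_apply f 0
  refine ⟨Function.extend Subtype.val f 0, fun z hz => ?_, fun z => (hext z).symm⟩
  refine (differentiableWithinAt_const (f ⟨z, hz⟩)).congr_of_eventuallyEq ?_ (hext ⟨z, hz⟩)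
  have hconst : ∀ᶠ w : Ω in 𝓝 ⟨z, hz⟩, f w = f ⟨z, hz⟩ := f.isLocallyConstant.eventually_eq _
  refine (eventually_nhds_subtype_iff Ω ⟨z, hz⟩ _).mp (hconst.mono fun w hw => ?_)
  exact (hext w).trans hw

/-- The subspace of the functions in `Hol Ω` that vanish off `V`. If `V` is a connected component of
an open set `Ω`, such a function is determined by its germ at any point of `V`. -/
noncomputable def vanishingOff (V : Set Ω) : Submodule ℂ (Hol Ω) :=
  ⨅ z ∈ Vᶜ, (eval z).ker

theorem mem_vanishingOff {V : Set Ω} {f : Hol Ω} : f ∈ vanishingOff V ↔ ∀ z ∉ V, f.1 z = 0 := by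
  simp only [vanishingOff, Submodule.mem_iInf]
  rfl

theorem isClosed_vanishingOff (V : Set Ω) : IsClosed (vanishingOff V : Set (Hol Ω)) := by
  simp only [vanishingOff, Submodule.coe_iInf]
  exact isClosed_biInter fun z _ => (eval z).isClosed_ker

theorem not_finite_vanishingOff {V : Set Ω} (hV : IsClopen V) (hinf : V.Infinite) :
    ¬ Module.Finite ℂ (vanishingOff V) := by
  intro hfin
  let χ : Hol Ω := ⟨_, locallyConstant_mem (LocallyConstant.charFn ℂ hV)⟩
  let T : Polynomial ℂ →ₗ[ℂ] Hol Ω := LinearMap.mulLeft ℂ χ ∘ₗ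
    (Polynomial.aeval (coord Ω)).toLinearMap
  have hT_apply : ∀ P (z : Ω), (T P).1 z = V.indicator 1 z * P.eval (z : ℂ) := fun P z => by
    rw [← aeval_coord_apply, ← LocallyConstant.coe_charFn ℂ hV]
    rfl
  have hT_mem : ∀ P, T P ∈ vanishingOff V := fun P =>
    mem_vanishingOff.mpr fun z hz => by rw [hT_apply, Set.indicator_of_notMem hz, zero_mul]
  have hT_inj : Function.Injective (T.codRestrict _ hT_mem) := by
    refine (injective_iff_map_eq_zero _).mpr fun P hP => ?_
    refine Polynomial.eq_zero_of_infinite_isRoot P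
      ((hinf.image Subtype.val_injective.injOn).mono ?_)
    rintro _ ⟨z, hz, rfl⟩
    have hTz : (T P).1 z = 0 := by rw [show T P = 0 from congrArg Subtype.val hP]; rfl
    rwa [hT_apply, Set.indicator_of_mem hz, Pi.one_apply, one_mul] at hTz
  exact Module.Finite.not_linearIndependent_of_infinite _
    ((Polynomial.basisMonomials ℂ).linearIndependent.map_injOn _ hT_inj.injOn)

theorem eqOn_zero_of_frequently_eq_zero (hΩ : IsOpen Ω) {f : Hol Ω} {U : Set Ω}
    (hU : IsPreconnected U) {c : Ω} (hc : c ∈ U) (hf : ∃ᶠ z in 𝓝[≠] c, f.1 z = 0) :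
    Set.EqOn f.1 0 U := by
  obtain ⟨g, hg, hfg⟩ := f.2
  have hval : Tendsto ((↑) : Ω → ℂ) (𝓝[≠] c) (𝓝[≠] c) :=
    tendsto_nhdsWithin_iff.mpr ⟨(continuous_subtype_val.tendsto c).mono_left nhdsWithin_le_nhds,
      eventually_nhdsWithin_of_forall fun z hz => Subtype.coe_ne_coe.mpr hz⟩
  have han : AnalyticOnNhd ℂ g (Subtype.val '' U) :=
    (hg.analyticOnNhd hΩ).mono (Subtype.coe_image_subset Ω U)
  have hzero : Set.EqOn g 0 (Subtype.val '' U) :=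
    han.eqOn_zero_of_preconnected_of_frequently_eq_zero
      (hU.image _ continuous_subtype_val.continuousOn) (Set.mem_image_of_mem _ hc)
      (hval.frequently (hf.mono fun z hz => (hfg z).symm.trans hz))
  exact fun z hz => (hfg z).trans (hzero (Set.mem_image_of_mem _ hz))

theorem eventually_ne_zero_of_mem_vanishingOff (hΩ : IsOpen Ω) {c : Ω} {g : Hol Ω}
    (hg : g ∈ vanishingOff (connectedComponent c)) (hg0 : g ≠ 0) :
    ∀ᶠ z in 𝓝[≠] c, g.1 z ≠ 0 := by
  by_contra hfreq
  have hzero := eqOn_zero_of_frequently_eq_zero hΩ isPreconnected_connectedComponent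
    mem_connectedComponent hfreq
  refine hg0 (Subtype.ext (ContinuousMap.ext fun z => ?_))
  by_cases hz : z ∈ connectedComponent c
  · exact hzero hz
  · exact mem_vanishingOff.mp hg z hz

theorem exists_seq_functional (hΩ : IsOpen Ω) (c : Ω) :
    ∃ ℓ : ℕ → Hol Ω →L[ℂ] ℂ, (∀ g, Tendsto (fun n => ℓ n g) atTop (𝓝 0)) ∧
      ∀ g ∈ vanishingOff (connectedComponent c), g ≠ 0 → ∀ᶠ n in atTop, ℓ n g ≠ 0 := by
  have := perfectSpace_of_isOpen hΩ
  obtain ⟨p, hp⟩ := exists_seq_tendsto (𝓝[≠] c)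
  obtain ⟨hpc, hp_ne⟩ := tendsto_nhdsWithin_iff.mp hp
  refine ⟨fun n => ((p n : ℂ) - c) • eval (p n), fun g => ?_, fun g hg hg0 => ?_⟩
  · have hcont : Continuous fun z : Ω => ((z : ℂ) - c) * g.1 z := by fun_prop
    have hlim := (hcont.tendsto c).comp hpc
    rwa [sub_self, zero_mul] at hlim
  · filter_upwards [hp_ne, hp.eventually (eventually_ne_zero_of_mem_vanishingOff hΩ hg hg0)]
      with n hpn hgn
    exact mul_ne_zero (sub_ne_zero.mpr (Subtype.coe_ne_coe.mpr hpn)) hgn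

end Hol

/-- `S_uc \ S_u` is spaceable in `H(Ω)^ℕ`. -/
theorem Suc_diff_Su_spaceable
    (Ω : Set ℂ) (hΩ : IsOpen Ω) (hne : Ω.Nonempty) :
    ∃ M : Submodule ℂ (HSeq Ω),
      IsClosed (M : Set (HSeq Ω)) ∧ ¬ Module.Finite ℂ M ∧
      (M : Set (HSeq Ω)) \ {0} ⊆ Suc Ω \ Su Ω := by
  have := hΩ.locallyConnectedSpace
  have := perfectSpace_of_isOpen hΩ
  obtain ⟨h, hh⟩ := Hol.exists_not_isBounded_range (not_isCompact_of_isOpen hΩ hne)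
  obtain ⟨c⟩ := hne.to_subtype
  obtain ⟨ℓ, hℓ_zero, hℓ_ne⟩ := Hol.exists_seq_functional hΩ c
  have hV : IsClopen (connectedComponent c) := isClopen_connectedComponent
  have hV_inf : (connectedComponent c).Infinite :=
    infinite_of_mem_nhds c (hV.isOpen.mem_nhds mem_connectedComponent)
  refine ⟨(Hol.vanishingOff (connectedComponent c)).map (consSMul ℓ h).toLinearMap,
    isClosed_map_consSMul ℓ h (Hol.isClosed_vanishingOff _),
    (finite_map_consSMul_iff ℓ h _).not.mpr (Hol.not_finite_vanishingOff hV hV_inf), ?_⟩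
  rintro _ ⟨⟨g, hg, rfl⟩, hg_image⟩
  have hg0 : g ≠ 0 := fun h0 => hg_image (h0 ▸ map_zero (consSMul ℓ h))
  exact ⟨mem_Suc_iff_tendsto_zero.mpr (tendsto_consSMul_zero (hℓ_zero g) h),
    consSMul_notMem_Su hh (hℓ_ne g hg hg0).frequently⟩
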